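/- Let α ∈ (0,1), suppose both d₁ and d₂ are of type ν for some ν ≥ 0, let s > 1/2, and let s₁ ∈ ℝ satisfy s₁ − s < min{1, 2s − 1 − ν}. Then there exists a constant C > 0 such that for every k ∈ ℤ, ⟨k⟩^{2 + 2s₁ − 2s} · Σ_{k₁ ∈ ℤ, k₁ > 0} ⟨k₁⟩^{4 − 4s} / [ (k₁ − d₁k)² (k₁ − d₂k)² (k₁ + d₁k)² (k₁ + d₂k)² ] ≤ C. (For k₁ > 0 none of the four factors vanishes, since d₁ and d₂ are irrational.) -/

import Mathlib

/-- The Japanese bracket `⟨x⟩ = (1 + x²)^{1/2}`. -/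
noncomputable def jb (x : ℝ) : ℝ := Real.sqrt (1 + x^2)

/-- The larger root `c₁ = 1/2 + √(12/α − 3)/6` of `3αx² − 3αx + (α − 1)`. -/
noncomputable def c1 (α : ℝ) : ℝ := 1/2 + Real.sqrt (12/α - 3)/6

/-- The smaller root `c₂ = 1/2 − √(12/α − 3)/6` of `3αx² − 3αx + (α − 1)`. -/
noncomputable def c2 (α : ℝ) : ℝ := 1/2 - Real.sqrt (12/α - 3)/6

/-- `d₁ = 1/c₁`. -/
noncomputable def d1 (α : ℝ) : ℝ := (c1 α)⁻¹

/-- `d₂ = 1/c₂`. -/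
noncomputable def d2 (α : ℝ) : ℝ := (c2 α)⁻¹

/-- A real number `ρ` is of type `ν` if there is `K > 0` with
`|ρ − m/n| ≥ K/|n|^{2+ν}` for all integers `m` and all nonzero integers `n`. -/
def IsOfType (ρ ν : ℝ) : Prop :=
  ∃ K > 0, ∀ m n : ℤ, n ≠ 0 → K / |(n : ℝ)| ^ (2 + ν) ≤ |ρ - (m : ℝ) / (n : ℝ)|

/-- The `k₁`-summand of the resonant (`k₁ + k₂ = 0`) part of the `R₃` multiplier sum
(zero unless `k₁ > 0`). -/
noncomputable def R3resSummand (α s : ℝ) (k k₁ : ℤ) : ℝ :=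
  if 0 < k₁ then
    jb (k₁ : ℝ) ^ (4 - 4 * s) /
      (((k₁ : ℝ) - d1 α * (k : ℝ))^2 * ((k₁ : ℝ) - d2 α * (k : ℝ))^2
        * ((k₁ : ℝ) + d1 α * (k : ℝ))^2 * ((k₁ : ℝ) + d2 α * (k : ℝ))^2)
  else 0

/-!
The lines `n = σ k` with `σ ∈ {±d₁, ±d₂}` are distinct and different from both axes, so at a point
`(k, n)` at most one of the factors `n - σ k` is small compared with `⟨n⟩ + ⟨k⟩`. If none is, the
weighted summand is at most a constant times `|n|^e` for a fixed `e < -1`. If `n - ρ k` is small,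
then `⟨n⟩` and `⟨k⟩` are comparable, the other factors are at least of that size, and what remains
is a constant times `⟨k⟩^{-2-2ν} / (n - ρ k)²`. The type condition bounds this expression at the
integer `n` nearest to `ρ k`, and the other terms are dominated by a translate of `∑ 4 / n²`.
-/

open Filter Finset

section Bracket

lemma one_le_jb (x : ℝ) : 1 ≤ jb x :=
  Real.one_le_sqrt.mpr (le_add_of_nonneg_right (sq_nonneg x))

lemma jb_pos (x : ℝ) : 0 < jb x :=
  one_pos.trans_le (one_le_jb x)

lemma abs_le_jb (x : ℝ) : |x| ≤ jb x :=
  Real.abs_le_sqrt (by linarith)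

lemma jb_le_one_add_abs (x : ℝ) : jb x ≤ 1 + |x| := by
  rw [jb, Real.sqrt_le_left (by positivity)]
  nlinarith [abs_nonneg x, sq_abs x]

lemma jb_add_jb_le_three_mul {n : ℤ} (hn : n ≠ 0) (k : ℤ) :
    jb n + jb k ≤ 3 * (|(n : ℝ)| + |(k : ℝ)|) := by
  have one_le_abs : (1 : ℝ) ≤ |(n : ℝ)| := mod_cast Int.one_le_abs hn
  linarith [jb_le_one_add_abs n, jb_le_one_add_abs k, abs_nonneg (k : ℝ)]

end Bracket

section BoundedSums

variable {ι κ : Type*} {f g : ι → κ → ℝ}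

/-- The series `∑ⱼ f i j` converge for all `i`, with sums bounded above uniformly in `i`. -/
def HasBoundedSums (f : ι → κ → ℝ) : Prop :=
  ∃ C, ∀ i, Summable (f i) ∧ ∑' j, f i j ≤ C

namespace HasBoundedSums

lemma of_hasSum {a : ι → ℝ} {C : ℝ} (hf : ∀ i, HasSum (f i) (a i)) (ha : ∀ i, a i ≤ C) :
    HasBoundedSums f :=
  ⟨C, fun i => ⟨(hf i).summable, (hf i).tsum_eq.trans_le (ha i)⟩⟩

lemma of_summable {u : κ → ℝ} (hu : Summable u) : HasBoundedSums fun _ : ι => u :=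
  of_hasSum (fun _ => hu.hasSum) fun _ => le_rfl

lemma mono (hg : HasBoundedSums g) (hf : ∀ i j, 0 ≤ f i j) (hfg : ∀ i j, f i j ≤ g i j) :
    HasBoundedSums f := by
  obtain ⟨C, hC⟩ := hg
  refine ⟨C, fun i => ?_⟩
  have summable_f : Summable (f i) := .of_nonneg_of_le (hf i) (hfg i) (hC i).1
  exact ⟨summable_f, (summable_f.tsum_le_tsum (hfg i) (hC i).1).trans (hC i).2⟩

lemma add (hf : HasBoundedSums f) (hg : HasBoundedSums g) :
    HasBoundedSums fun i j => f i j + g i j := by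
  obtain ⟨C, hC⟩ := hf
  obtain ⟨D, hD⟩ := hg
  refine ⟨C + D, fun i => ⟨(hC i).1.add (hD i).1, ?_⟩⟩
  rw [(hC i).1.tsum_add (hD i).1]
  exact add_le_add (hC i).2 (hD i).2

lemma const_mul {c : ℝ} (hc : 0 ≤ c) (hf : HasBoundedSums f) :
    HasBoundedSums fun i j => c * f i j := by
  obtain ⟨C, hC⟩ := hf
  refine ⟨c * C, fun i => ⟨(hC i).1.mul_left c, ?_⟩⟩
  rw [tsum_mul_left]
  exact mul_le_mul_of_nonneg_left (hC i).2 hc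

lemma finset_sum {γ : Type*} {S : Finset γ} {F : γ → ι → κ → ℝ}
    (hF : ∀ σ ∈ S, HasBoundedSums (F σ)) :
    HasBoundedSums fun i j => ∑ σ ∈ S, F σ i j := by
  choose! C hC using hF
  refine ⟨∑ σ ∈ S, C σ, fun i => ⟨summable_sum fun σ hσ => (hC σ hσ i).1, ?_⟩⟩
  rw [Summable.tsum_finsetSum fun σ hσ => (hC σ hσ i).1]
  exact sum_le_sum fun σ hσ => (hC σ hσ i).2

lemma exists_pos_mul_tsum_le {w : ι → ℝ} (hw : ∀ i, w i ≠ 0)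
    (hf : HasBoundedSums fun i j => w i * f i j) :
    ∃ C > 0, ∀ i, Summable (f i) ∧ w i * ∑' j, f i j ≤ C := by
  obtain ⟨C, hC⟩ := hf
  refine ⟨max C 1, by positivity, fun i => ⟨(summable_mul_left_iff (hw i)).mp (hC i).1, ?_⟩⟩
  rw [← tsum_mul_left]
  exact (hC i).2.trans (le_max_left C 1)

end HasBoundedSums

end BoundedSums

section DiophantineType

variable {ρ ν : ℝ}

lemma one_div_sub_sq_le_of_ne_round {x : ℝ} {n : ℤ} (hn : n ≠ round x) :
    1 / (n - x) ^ 2 ≤ 4 * (1 / ((n - round x : ℤ) : ℝ) ^ 2) := by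
  have one_le_dist : (1 : ℝ) ≤ |((n - round x : ℤ) : ℝ)| :=
    mod_cast Int.one_le_abs (sub_ne_zero.mpr hn)
  have dist_le : |((n - round x : ℤ) : ℝ)| ≤ 2 * |n - x| := by
    have triangle := abs_sub_le (n : ℝ) x (round x)
    push_cast at one_le_dist ⊢
    linarith [abs_sub_round x]
  have dist_sq_le := pow_le_pow_left₀ (abs_nonneg _) dist_le 2
  rw [mul_pow, sq_abs, sq_abs] at dist_sq_le
  have dist_sq_pos : 0 < ((n - round x : ℤ) : ℝ) ^ 2 := by
    rw [← sq_abs]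
    positivity
  rw [mul_one_div, div_le_div_iff₀ (by linarith) dist_sq_pos]
  linarith

namespace IsOfType

lemma neg (h : IsOfType ρ ν) : IsOfType (-ρ) ν := by
  obtain ⟨K, hK, hle⟩ := h
  refine ⟨K, hK, fun m n hn => ?_⟩
  have reflected := hle (-m) n hn
  rwa [Int.cast_neg, neg_div, sub_neg_eq_add, ← abs_neg (_ + _), neg_add'] at reflected

lemma ne_zero (h : IsOfType ρ ν) : ρ ≠ 0 := by
  rintro rfl
  obtain ⟨K, hK, hle⟩ := h
  have K_nonpos := hle 0 1 one_ne_zero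
  norm_num at K_nonpos
  exact hK.not_ge K_nonpos

lemma exists_le_abs_sub_mul (hν : 0 ≤ ν) (h : IsOfType ρ ν) :
    ∃ K > 0, ∀ n k : ℤ, (n : ℝ) - ρ * k ≠ 0 → K ≤ |n - ρ * k| * jb k ^ (1 + ν) := by
  obtain ⟨K, hK, hle⟩ := h
  refine ⟨min K 1, by positivity, fun n k hne => ?_⟩
  rcases eq_or_ne k 0 with rfl | hk
  · have n_ne : n ≠ 0 := by simpa using hne
    have one_le_abs : (1 : ℝ) ≤ |(n : ℝ)| := mod_cast Int.one_le_abs n_ne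
    simpa [jb] using Or.inr one_le_abs
  · have abs_k_pos : 0 < |(k : ℝ)| := by positivity
    calc min K 1 ≤ K := min_le_left K 1
      _ ≤ |ρ - n / k| * |(k : ℝ)| ^ (2 + ν) :=
        (div_le_iff₀ (Real.rpow_pos_of_pos abs_k_pos _)).mp (hle n k hk)
      _ = |(ρ - n / k) * k| * |(k : ℝ)| ^ (1 + ν) := by
        rw [abs_mul, mul_assoc, ← Real.rpow_one_add' abs_k_pos.le (by positivity)]
        ring_nf
      _ = |n - ρ * k| * |(k : ℝ)| ^ (1 + ν) := by
        rw [sub_mul, div_mul_cancel₀ _ (abs_pos.mp abs_k_pos), abs_sub_comm]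
      _ ≤ |n - ρ * k| * jb k ^ (1 + ν) := by
        gcongr
        exact abs_le_jb k

lemma exists_rpow_neg_div_sq_le (hν : 0 ≤ ν) (h : IsOfType ρ ν) :
    ∃ C, ∀ k n : ℤ, jb k ^ (-(2 + 2 * ν)) / (n - ρ * k) ^ 2 ≤ C := by
  obtain ⟨K, hK, hle⟩ := h.exists_le_abs_sub_mul hν
  refine ⟨1 / K ^ 2, fun k n => ?_⟩
  rcases eq_or_ne ((n : ℝ) - ρ * k) 0 with hzero | hne
  · rw [hzero, zero_pow two_ne_zero, div_zero]
    positivity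
  · have sq_le := pow_le_pow_left₀ hK.le (hle n k hne) 2
    rw [mul_pow, sq_abs, ← Real.rpow_mul_natCast (jb_pos k).le] at sq_le
    rw [Real.rpow_neg (jb_pos k).le, div_eq_mul_inv, ← mul_inv, ← one_div]
    refine one_div_le_one_div_of_le (by positivity) (sq_le.trans_eq ?_)
    push_cast
    ring_nf

lemma hasBoundedSums (hν : 0 ≤ ν) (h : IsOfType ρ ν) :
    HasBoundedSums fun k n : ℤ => jb k ^ (-(2 + 2 * ν)) / (n - ρ * k) ^ 2 := by
  obtain ⟨C, hC⟩ := h.exists_rpow_neg_div_sq_le hν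
  have nearest : HasBoundedSums fun k n : ℤ => if n = round (ρ * k) then C else 0 :=
    .of_hasSum (fun k => hasSum_ite_eq _ C) fun _ => le_rfl
  have translates : HasBoundedSums fun k n : ℤ => 1 / ((n - round (ρ * k) : ℤ) : ℝ) ^ 2 :=
    .of_hasSum (fun k => ((Equiv.subRight (round (ρ * k))).hasSum_iff
      (f := fun n : ℤ => 1 / (n : ℝ) ^ 2)).mpr
        (Real.summable_one_div_int_pow.mpr one_lt_two).hasSum) fun _ => le_rfl
  refine (nearest.add (translates.const_mul zero_le_four)).mono
    (fun k n => div_nonneg (Real.rpow_nonneg (jb_pos k).le _) (sq_nonneg _)) fun k n => ?_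
  split_ifs with hn
  · exact (hC k n).trans (le_add_of_nonneg_right (by positivity))
  · rw [zero_add]
    refine le_trans ?_ (one_div_sub_sq_le_of_ne_round hn)
    gcongr
    exact Real.rpow_le_one_of_one_le_of_nonpos (one_le_jb k) (by linarith)

end IsOfType

end DiophantineType

section Dichotomy

lemma abs_add_abs_le_mul_max_abs (σ x y : ℝ) :
    |x| + |y| ≤ (2 + |σ|) * max |x - σ * y| |y| := by
  have triangle : |x| ≤ |x - σ * y| + |σ| * |y| := by
    rw [← abs_mul]
    linarith [abs_sub_abs_le_abs_sub x (σ * y)]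
  calc |x| + |y| ≤ |x - σ * y| + (1 + |σ|) * |y| := by linarith
    _ ≤ max |x - σ * y| |y| + (1 + |σ|) * max |x - σ * y| |y| := by
      gcongr
      exacts [le_max_left _ _, le_max_right _ _]
    _ = (2 + |σ|) * max |x - σ * y| |y| := by ring

lemma eventually_abs_add_abs_le_mul_max {ρ σ : ℝ} (hρσ : ρ ≠ σ) :
    ∀ᶠ L in atTop, ∀ x y : ℝ, |x| + |y| ≤ L * max |x - ρ * y| |x - σ * y| := by
  have gap_pos : 0 < |ρ - σ| := abs_pos.mpr (sub_ne_zero.mpr hρσ)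
  filter_upwards [eventually_ge_atTop ((2 + |ρ|) * (1 + 2 / |ρ - σ|))] with L hL x y
  set m := max |x - ρ * y| |x - σ * y|
  have m_nonneg : 0 ≤ m := le_max_of_le_left (abs_nonneg _)
  have y_le : |y| ≤ 2 / |ρ - σ| * m := by
    rw [div_mul_eq_mul_div, le_div_iff₀ gap_pos, ← abs_mul]
    calc |y * (ρ - σ)| = |(x - σ * y) - (x - ρ * y)| := by ring_nf
      _ ≤ |x - σ * y| + |x - ρ * y| := abs_sub _ _
      _ ≤ m + m := add_le_add (le_max_right _ _) (le_max_left _ _)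
      _ = 2 * m := by ring
  calc |x| + |y| ≤ (2 + |ρ|) * max |x - ρ * y| |y| := abs_add_abs_le_mul_max_abs ρ x y
    _ ≤ (2 + |ρ|) * ((1 + 2 / |ρ - σ|) * m) := by
      gcongr
      rw [add_mul, one_mul]
      exact max_le_add_of_nonneg (by positivity) (by positivity) |>.trans
        (add_le_add (le_max_left _ _) y_le)
    _ = (2 + |ρ|) * (1 + 2 / |ρ - σ|) * m := by ring
    _ ≤ L * m := mul_le_mul_of_nonneg_right hL m_nonneg

lemma eventually_nonresonant_or_resonant {S : Finset ℝ} (hS : ∀ σ ∈ S, σ ≠ 0) :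
    ∀ᶠ L in atTop, ∀ x y : ℝ,
      (∀ σ ∈ S, |x| + |y| ≤ L * |x - σ * y|) ∨
      ∃ ρ ∈ S, |x| + |y| ≤ L * |x| ∧ |x| + |y| ≤ L * |y| ∧
        ∀ σ ∈ S.erase ρ, |x| + |y| ≤ L * |x - σ * y| := by
  have pairs : ∀ᶠ L in atTop, ∀ ρ ∈ S, ∀ σ ∈ S.erase ρ, ∀ x y : ℝ,
      |x| + |y| ≤ L * max |x - ρ * y| |x - σ * y| :=
    (eventually_all_finset S).mpr fun ρ _ => (eventually_all_finset _).mpr fun σ hσ =>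
      eventually_abs_add_abs_le_mul_max (ne_of_mem_erase hσ).symm
  have zero_slope : ∀ᶠ L in atTop, ∀ ρ ∈ S, ∀ x y : ℝ,
      |x| + |y| ≤ L * max |x - ρ * y| |x - 0 * y| :=
    (eventually_all_finset S).mpr fun ρ hρ => eventually_abs_add_abs_le_mul_max (hS ρ hρ)
  have large : ∀ᶠ L in atTop, ∀ ρ ∈ S, 2 + |ρ| ≤ L :=
    (eventually_all_finset S).mpr fun ρ _ => eventually_ge_atTop _
  filter_upwards [pairs, zero_slope, large, eventually_ge_atTop 0]
    with L hpairs hzero hlarge L_nonneg x y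
  rw [or_iff_not_imp_left]
  intro hnot
  push Not at hnot
  obtain ⟨ρ, hρ, hlt⟩ := hnot
  have of_le_max {z : ℝ} (h : |x| + |y| ≤ L * max |x - ρ * y| z) : |x| + |y| ≤ L * z := by
    rw [mul_max_of_nonneg _ _ L_nonneg, le_max_iff] at h
    exact h.resolve_left hlt.not_ge
  refine ⟨ρ, hρ, of_le_max ?_, of_le_max ?_, fun σ hσ => of_le_max (hpairs ρ hρ σ hσ x y)⟩
  · simpa using hzero ρ hρ x y
  · refine (abs_add_abs_le_mul_max_abs ρ x y).trans ?_
    gcongr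
    exact hlarge ρ hρ

lemma exists_jb_nonresonant_or_resonant {S : Finset ℝ} (hS : ∀ σ ∈ S, σ ≠ 0) :
    ∃ M ≥ 0, ∀ k n : ℤ, n ≠ 0 →
      (∀ σ ∈ S, jb n + jb k ≤ M * |n - σ * k|) ∨
      ∃ ρ ∈ S, jb n + jb k ≤ M * jb n ∧ jb n + jb k ≤ M * jb k ∧
        ∀ σ ∈ S.erase ρ, jb n + jb k ≤ M * |n - σ * k| := by
  obtain ⟨L, hL, L_nonneg⟩ :=
    ((eventually_nonresonant_or_resonant hS).and (eventually_ge_atTop 0)).exists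
  refine ⟨3 * L, by positivity, fun k n hn => ?_⟩
  have rescale {z : ℝ} (h : |(n : ℝ)| + |(k : ℝ)| ≤ L * z) : jb n + jb k ≤ 3 * L * z :=
    (jb_add_jb_le_three_mul hn k).trans (by linarith)
  have rescale_jb {m : ℤ} (h : |(n : ℝ)| + |(k : ℝ)| ≤ L * |(m : ℝ)|) :
      jb n + jb k ≤ 3 * L * jb m :=
    (rescale h).trans (mul_le_mul_of_nonneg_left (abs_le_jb m) (by positivity))
  refine (hL n k).imp (fun h σ hσ => rescale (h σ hσ)) ?_
  rintro ⟨ρ, hρ, hn_le, hk_le, hrest⟩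
  exact ⟨ρ, hρ, rescale_jb hn_le, rescale_jb hk_le, fun σ hσ => rescale (hrest σ hσ)⟩

end Dichotomy

section Weights

variable {X Y p q m M : ℝ}

lemma rpow_mul_rpow_mul_add_rpow_neg_le (hX : 1 ≤ X) (hY : 1 ≤ Y) (hm : 0 ≤ m) (hpm : p ≤ m) :
    Y ^ p * X ^ q * (X + Y) ^ (-m) ≤ X ^ (max p 0 + q - m) := by
  have X_pos : 0 < X := by linarith
  have sum_pos : 0 < X + Y := by linarith
  calc Y ^ p * X ^ q * (X + Y) ^ (-m)
      ≤ (X + Y) ^ max p 0 * X ^ q * (X + Y) ^ (-m) := by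
        gcongr
        calc Y ^ p ≤ Y ^ max p 0 := Real.rpow_le_rpow_of_exponent_le hY (le_max_left p 0)
          _ ≤ (X + Y) ^ max p 0 :=
            Real.rpow_le_rpow (by linarith) (by linarith) (le_max_right p 0)
    _ = (X + Y) ^ (max p 0 - m) * X ^ q := by
        rw [sub_eq_add_neg, Real.rpow_add sum_pos]
        ring
    _ ≤ X ^ (max p 0 - m) * X ^ q := by
        refine mul_le_mul_of_nonneg_right ?_ (by positivity)
        exact Real.rpow_le_rpow_of_nonpos X_pos (by linarith)
          (sub_nonpos.mpr (max_le hpm hm))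
    _ = X ^ (max p 0 + q - m) := by
        rw [← Real.rpow_add X_pos]
        ring_nf

lemma rpow_le_rpow_abs_mul_rpow (hX : 0 < X) (hY : 0 < Y) (hM : 0 < M) (hXY : X ≤ M * Y)
    (hYX : Y ≤ M * X) (q : ℝ) : X ^ q ≤ M ^ |q| * Y ^ q := by
  rcases le_total 0 q with hq | hq
  · rw [abs_of_nonneg hq, ← Real.mul_rpow hM.le hY.le]
    exact Real.rpow_le_rpow hX.le hXY hq
  · rw [abs_of_nonpos hq, Real.rpow_neg hM.le, ← div_eq_inv_mul, ← Real.div_rpow hY.le hM.le]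
    exact Real.rpow_le_rpow_of_nonpos (by positivity) ((div_le_iff₀' hM).mpr hYX) hq

lemma rpow_mul_rpow_mul_add_rpow_neg_le_of_comparable (hX : 0 < X) (hY : 0 < Y) (hM : 0 < M)
    (hm : 0 ≤ m) (hXM : X + Y ≤ M * X) (hYM : X + Y ≤ M * Y) :
    Y ^ p * X ^ q * (X + Y) ^ (-m) ≤ M ^ |q| * Y ^ (p + q - m) := by
  have X_rpow_le : X ^ q ≤ M ^ |q| * Y ^ q :=
    rpow_le_rpow_abs_mul_rpow hX hY hM (by linarith) (by linarith) q
  have sum_rpow_le : (X + Y) ^ (-m) ≤ Y ^ (-m) :=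
    Real.rpow_le_rpow_of_nonpos hY (by linarith) (by linarith)
  calc Y ^ p * X ^ q * (X + Y) ^ (-m) ≤ Y ^ p * (M ^ |q| * Y ^ q) * Y ^ (-m) := by gcongr
    _ = M ^ |q| * (Y ^ p * Y ^ q * Y ^ (-m)) := by ring
    _ = M ^ |q| * Y ^ (p + q - m) := by
      rw [← Real.rpow_add hY, ← Real.rpow_add hY, sub_eq_add_neg]

end Weights

section ResonantSum

variable {S : Finset ℝ} {p q ν M : ℝ} {k n : ℤ}

/-- The summand `⟨n⟩^q / ∏_σ (n − σ k)²`, restricted to `n > 0`, with a finite set `S` of slopes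
`σ` in place of `±d₁, ±d₂`. -/
noncomputable def resonantSummand (S : Finset ℝ) (q : ℝ) (k n : ℤ) : ℝ :=
  if 0 < n then jb n ^ q / ∏ σ ∈ S, (n - σ * k) ^ 2 else 0

lemma resonantSummand_nonneg (S : Finset ℝ) (q : ℝ) (k n : ℤ) : 0 ≤ resonantSummand S q k n := by
  unfold resonantSummand
  split_ifs
  · exact div_nonneg (Real.rpow_nonneg (jb_pos n).le q) (prod_nonneg fun σ _ => sq_nonneg _)
  · exact le_rfl

lemma inv_prod_sq_le {T : Finset ℝ} {x y r : ℝ} (hr : 0 < r)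
    (h : ∀ σ ∈ T, r ≤ M * |x - σ * y|) :
    (∏ σ ∈ T, (x - σ * y) ^ 2)⁻¹ ≤ M ^ (2 * #T) * r ^ (-(2 * #T : ℝ)) := by
  have sq_le : ∀ σ ∈ T, r ^ 2 ≤ M ^ 2 * (x - σ * y) ^ 2 := fun σ hσ => by
    simpa only [mul_pow, sq_abs] using pow_le_pow_left₀ hr.le (h σ hσ) 2
  have factor_pos : ∀ σ ∈ T, 0 < (x - σ * y) ^ 2 := fun σ hσ =>
    pos_of_mul_pos_right ((pow_pos hr 2).trans_le (sq_le σ hσ)) (sq_nonneg M)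
  have prod_le : r ^ (2 * #T) ≤ M ^ (2 * #T) * ∏ σ ∈ T, (x - σ * y) ^ 2 := by
    rw [pow_mul, pow_mul, ← prod_const, ← prod_const, ← prod_mul_distrib]
    exact prod_le_prod (fun _ _ => by positivity) sq_le
  have rpow_eq : r ^ (-(2 * #T : ℝ)) = (r ^ (2 * #T))⁻¹ := by
    rw [Real.rpow_neg hr.le, ← Real.rpow_natCast]
    push_cast
    rfl
  rwa [rpow_eq, ← div_eq_mul_inv, le_div_iff₀ (by positivity),
    inv_mul_le_iff₀' (prod_pos factor_pos)]

lemma nonresonant_term_le (hp : p ≤ 2 * #S) (hq : max p 0 + q - 2 * #S ≤ 0)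
    (hn : n ≠ 0) (hfar : ∀ σ ∈ S, jb n + jb k ≤ M * |n - σ * k|) :
    jb k ^ p * (jb n ^ q / ∏ σ ∈ S, (n - σ * k) ^ 2) ≤
      M ^ (2 * #S) * |(n : ℝ)| ^ (max p 0 + q - 2 * #S) := by
  have X_pos := jb_pos n
  have Y_pos := jb_pos k
  have const_nonneg : 0 ≤ M ^ (2 * #S) := (even_two_mul _).pow_nonneg M
  calc jb k ^ p * (jb n ^ q / ∏ σ ∈ S, (n - σ * k) ^ 2)
      = jb k ^ p * jb n ^ q * (∏ σ ∈ S, (n - σ * k) ^ 2)⁻¹ := by rw [div_eq_mul_inv, mul_assoc]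
    _ ≤ jb k ^ p * jb n ^ q * (M ^ (2 * #S) * (jb n + jb k) ^ (-(2 * #S : ℝ))) := by
      gcongr
      exact inv_prod_sq_le (by positivity) hfar
    _ = M ^ (2 * #S) * (jb k ^ p * jb n ^ q * (jb n + jb k) ^ (-(2 * #S : ℝ))) := by ring
    _ ≤ M ^ (2 * #S) * jb n ^ (max p 0 + q - 2 * #S) := by
      gcongr
      exact rpow_mul_rpow_mul_add_rpow_neg_le (one_le_jb n) (one_le_jb k) (by positivity) hp
    _ ≤ M ^ (2 * #S) * |(n : ℝ)| ^ (max p 0 + q - 2 * #S) := by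
      gcongr ?_ * ?_
      exact Real.rpow_le_rpow_of_nonpos (by positivity) (abs_le_jb n) hq

lemma resonant_term_le {ρ : ℝ} (hρ : ρ ∈ S) (hpq : p + q ≤ 2 * #S - 4 - 2 * ν)
    (hnM : jb n + jb k ≤ M * jb n) (hkM : jb n + jb k ≤ M * jb k)
    (hrest : ∀ σ ∈ S.erase ρ, jb n + jb k ≤ M * |n - σ * k|) :
    jb k ^ p * (jb n ^ q / ∏ σ ∈ S, (n - σ * k) ^ 2) ≤
      M ^ (2 * (#S - 1)) * M ^ |q| * (jb k ^ (-(2 + 2 * ν)) / (n - ρ * k) ^ 2) := by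
  have X_pos := jb_pos n
  have Y_pos := jb_pos k
  have M_pos : 0 < M := pos_of_mul_pos_left ((add_pos X_pos Y_pos).trans_le hnM) X_pos.le
  set T := S.erase ρ
  have card_T : #T + 1 = #S := card_erase_add_one hρ
  have weight_le : jb k ^ p * jb n ^ q * (jb n + jb k) ^ (-(2 * #T : ℝ)) ≤
      M ^ |q| * jb k ^ (-(2 + 2 * ν)) := by
    refine (rpow_mul_rpow_mul_add_rpow_neg_le_of_comparable X_pos Y_pos M_pos (by positivity)
      hnM hkM).trans ?_
    gcongr
    · exact one_le_jb k
    · rw [← card_T] at hpq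
      push_cast at hpq
      linarith
  calc jb k ^ p * (jb n ^ q / ∏ σ ∈ S, (n - σ * k) ^ 2)
      = jb k ^ p * jb n ^ q * (∏ σ ∈ T, (n - σ * k) ^ 2)⁻¹ * ((n - ρ * k) ^ 2)⁻¹ := by
        rw [← mul_prod_erase S _ hρ, div_eq_mul_inv, mul_inv]
        ring
    _ ≤ jb k ^ p * jb n ^ q * (M ^ (2 * #T) * (jb n + jb k) ^ (-(2 * #T : ℝ))) *
          ((n - ρ * k) ^ 2)⁻¹ := by
        gcongr
        exact inv_prod_sq_le (by positivity) hrest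
    _ = M ^ (2 * #T) * (jb k ^ p * jb n ^ q * (jb n + jb k) ^ (-(2 * #T : ℝ))) *
          ((n - ρ * k) ^ 2)⁻¹ := by ring
    _ ≤ M ^ (2 * #T) * (M ^ |q| * jb k ^ (-(2 + 2 * ν))) * ((n - ρ * k) ^ 2)⁻¹ := by gcongr
    _ = M ^ (2 * (#S - 1)) * M ^ |q| * (jb k ^ (-(2 + 2 * ν)) / (n - ρ * k) ^ 2) := by
        rw [← card_T, Nat.add_sub_cancel]
        ring

lemma exists_resonantSummand_le (hS : ∀ σ ∈ S, σ ≠ 0) (hp : p ≤ 2 * #S)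
    (hq : max p 0 + q - 2 * #S ≤ 0) (hpq : p + q ≤ 2 * #S - 4 - 2 * ν) :
    ∃ A ≥ 0, ∃ B ≥ 0, ∀ k n : ℤ, jb k ^ p * resonantSummand S q k n ≤
      A * |(n : ℝ)| ^ (max p 0 + q - 2 * #S) +
        B * ∑ σ ∈ S, jb k ^ (-(2 + 2 * ν)) / (n - σ * k) ^ 2 := by
  obtain ⟨M, M_nonneg, hM⟩ := exists_jb_nonresonant_or_resonant hS
  refine ⟨M ^ (2 * #S), by positivity, M ^ (2 * (#S - 1)) * M ^ |q|, by positivity,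
    fun k n => ?_⟩
  have weight_nonneg : 0 ≤ jb k ^ (-(2 + 2 * ν)) := Real.rpow_nonneg (jb_pos k).le _
  have term_nonneg : ∀ σ ∈ S, 0 ≤ jb k ^ (-(2 + 2 * ν)) / (n - σ * k) ^ 2 :=
    fun σ _ => by positivity
  have resonances_nonneg := mul_nonneg
    (show 0 ≤ M ^ (2 * (#S - 1)) * M ^ |q| by positivity) (sum_nonneg term_nonneg)
  unfold resonantSummand
  split_ifs with hn
  · rcases hM k n hn.ne' with hfar | ⟨ρ, hρ, hnM, hkM, hrest⟩
    · exact (nonresonant_term_le hp hq hn.ne' hfar).trans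
        (le_add_of_nonneg_right resonances_nonneg)
    · refine (resonant_term_le hρ hpq hnM hkM hrest).trans
        (le_add_of_nonneg_of_le (by positivity) ?_)
      gcongr
      exact single_le_sum term_nonneg hρ
  · rw [mul_zero]
    exact add_nonneg (by positivity) resonances_nonneg

theorem hasBoundedSums_resonantSummand (hν : 0 ≤ ν) (hS : ∀ σ ∈ S, IsOfType σ ν)
    (hp : p ≤ 2 * #S) (hq : q < 2 * #S - 1) (hpq : p + q ≤ 2 * #S - 4 - 2 * ν) :
    HasBoundedSums fun k n : ℤ => jb k ^ p * resonantSummand S q k n := by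
  have exponent_lt : max p 0 + q - 2 * #S < -1 := by
    rcases max_choice p 0 with h | h <;> rw [h] <;> linarith
  obtain ⟨A, A_nonneg, B, B_nonneg, hle⟩ :=
    exists_resonantSummand_le (fun σ hσ => (hS σ hσ).ne_zero) hp (by linarith) hpq
  have summable_rpow : Summable fun n : ℤ => |(n : ℝ)| ^ (max p 0 + q - 2 * #S) := by
    simpa only [neg_neg] using Real.summable_abs_int_rpow (lt_neg_of_lt_neg exponent_lt)
  have nonresonant := (HasBoundedSums.of_summable (ι := ℤ) summable_rpow).const_mul A_nonneg
  have resonant := (HasBoundedSums.finset_sum fun σ hσ =>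
    (hS σ hσ).hasBoundedSums hν).const_mul B_nonneg
  exact (nonresonant.add resonant).mono
    (fun k n => mul_nonneg (Real.rpow_nonneg (jb_pos k).le p) (resonantSummand_nonneg S q k n)) hle

end ResonantSum

section Slopes

variable {α ν : ℝ}

lemma d1_ne_d2 (hα : α ∈ Set.Ioo (0 : ℝ) 4) : d1 α ≠ d2 α := by
  have sqrt_pos : 0 < √(12 / α - 3) := by
    rw [Real.sqrt_pos, sub_pos, lt_div_iff₀ hα.1]
    linarith [hα.2]
  refine inv_injective.ne ?_
  unfold c1 c2
  linarith

lemma d1_ne_neg_d2 (α : ℝ) : d1 α ≠ -d2 α := by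
  rw [d1, d2, ← inv_neg]
  refine inv_injective.ne ?_
  unfold c1 c2
  linarith

/-- The slopes `d₁, -d₁, d₂, -d₂` of the resonant lines `k₁ = σ k`. -/
noncomputable def resonantSlopes (α : ℝ) : List ℝ := [d1 α, -d1 α, d2 α, -d2 α]

lemma nodup_resonantSlopes (hα : α ∈ Set.Ioo (0 : ℝ) 4) (h1 : d1 α ≠ 0) (h2 : d2 α ≠ 0) :
    (resonantSlopes α).Nodup := by
  have hne := d1_ne_d2 hα
  have hne_neg := d1_ne_neg_d2 α
  simp [resonantSlopes, self_eq_neg, neg_eq_iff_eq_neg, h1, h2, hne, hne_neg]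

lemma isOfType_of_mem_resonantSlopes (h1 : IsOfType (d1 α) ν) (h2 : IsOfType (d2 α) ν) :
    ∀ σ ∈ (resonantSlopes α).toFinset, IsOfType σ ν := by
  simpa [resonantSlopes] using ⟨h1, h1.neg, h2, h2.neg⟩

lemma R3resSummand_eq_resonantSummand (hα : α ∈ Set.Ioo (0 : ℝ) 4) (h1 : d1 α ≠ 0)
    (h2 : d2 α ≠ 0) (s : ℝ) :
    R3resSummand α s = resonantSummand (resonantSlopes α).toFinset (4 - 4 * s) := by
  funext k n
  rw [R3resSummand, resonantSummand, List.prod_toFinset _ (nodup_resonantSlopes hα h1 h2)]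
  simp only [resonantSlopes, List.map_cons, List.map_nil, List.prod_cons, List.prod_nil]
  ring_nf

end Slopes

theorem R3_resonant_multiplier_bound_general (α : ℝ) (hα : α ∈ Set.Ioo (0 : ℝ) 4)
    (ν : ℝ) (hν : 0 ≤ ν) (hd1 : IsOfType (d1 α) ν) (hd2 : IsOfType (d2 α) ν)
    (s s₁ : ℝ) (hs : -3 / 4 < s) (hs₁ : s₁ - s ≤ min 3 (2 * s - 1 - ν)) :
    ∃ C > 0, ∀ k : ℤ,
      Summable (fun k₁ : ℤ => R3resSummand α s k k₁) ∧
      jb (k : ℝ) ^ (2 + 2 * s₁ - 2 * s) * (∑' k₁ : ℤ, R3resSummand α s k k₁) ≤ C := by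
  obtain ⟨hs₁_le_three, hs₁_le⟩ := le_min_iff.mp hs₁
  have card : (#(resonantSlopes α).toFinset : ℝ) = 4 :=
    mod_cast List.toFinset_card_of_nodup (nodup_resonantSlopes hα hd1.ne_zero hd2.ne_zero)
  rw [R3resSummand_eq_resonantSummand hα hd1.ne_zero hd2.ne_zero]
  refine HasBoundedSums.exists_pos_mul_tsum_le
    (fun k : ℤ => (Real.rpow_pos_of_pos (jb_pos k) _).ne') ?_
  apply hasBoundedSums_resonantSummand hν (isOfType_of_mem_resonantSlopes hd1 hd2) <;>
    rw [card] <;> linarith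

/-- The resonant `R₃` multiplier bound: for `α ∈ (0,1)` with `d₁, d₂` of type `ν ≥ 0`,
`s > 1/2`, and `s₁ − s < min{1, 2s − 1 − ν}`, there is `C > 0` such that for every `k ∈ ℤ`,
`⟨k⟩^{2+2s₁−2s} Σ_{k₁ > 0} ⟨k₁⟩^{4−4s} /
 [(k₁−d₁k)²(k₁−d₂k)²(k₁+d₁k)²(k₁+d₂k)²] ≤ C`. -/
theorem R3_resonant_multiplier_bound (α : ℝ) (hα : α ∈ Set.Ioo (0 : ℝ) 1)
    (ν : ℝ) (hν : 0 ≤ ν) (hd1 : IsOfType (d1 α) ν) (hd2 : IsOfType (d2 α) ν)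
    (s s₁ : ℝ) (hs : 1/2 < s) (hs₁ : s₁ - s < min 1 (2 * s - 1 - ν)) :
    ∃ C > 0, ∀ k : ℤ,
      Summable (fun k₁ : ℤ => R3resSummand α s k k₁) ∧
      jb (k : ℝ) ^ (2 + 2 * s₁ - 2 * s) * (∑' k₁ : ℤ, R3resSummand α s k k₁) ≤ C :=
  R3_resonant_multiplier_bound_general α ⟨hα.1, hα.2.trans (by norm_num)⟩ ν hν hd1 hd2 s s₁
    (by linarith) (hs₁.le.trans (min_le_min_right _ (by norm_num)))
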